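/- arXiv:2408.07970 — 8 statements merged into one kernel-verified Lean document; each statement's English description precedes it below -/
import Mathlib

section
/- Let a ∈ ℂ with a ≠ 0, and let d̂, d_F, M be integers with 0 ≤ d_F ≤ d̂ and 0 ≤ M ≤ d̂ − d_F. Let F₀, F₁ ∈ ℂ[X] be such that gcd(F₀, F₁) is associated to X^{d_F}, and suppose F₀ ≠ 0. Then there exists exactly one pair (R₀, R₁) of polynomials in ℂ[X] such that F₀·R₁ − F₁·R₀ = a·X^{d̂}, X^M divides both R₀ and R₁, and deg(R₀) < deg(F₀) − d_F + M (with deg 0 = ⊥). -/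
open Polynomial

/-!
Write `F₀ = X^dF * G₀` and `F₁ = X^dF * G₁` with `G₀`, `G₁` coprime, and `Rᵢ = X^M * Sᵢ`. Cancelling
`X^(M + dF)` turns the claim into the classical one for the coprime pair `(G₀, G₁)`: the equation
`G₀ * S₁ - G₁ * S₀ = B` has exactly one solution with `deg S₀ < deg G₀`. A solution is obtained from
a Bézout identity by reducing `S₀` modulo `G₀`; it is unique since `S₀` is determined
modulo `G₀`, and `S₁` is determined by `S₀`. This is `existsUnique_of_isCoprime`.
-/

theorem existsUnique_of_isCoprime {K : Type*} [Field K] {G₀ G₁ : K[X]} (h : IsCoprime G₀ G₁)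
    (hG₀ : G₀ ≠ 0) (B : K[X]) :
    ∃! S : K[X] × K[X], G₀ * S.2 - G₁ * S.1 = B ∧ S.1.degree < G₀.degree := by
  have hcop := h
  obtain ⟨u, v, huv⟩ := h
  refine ⟨((-v * B) % G₀, u * B - G₁ * ((-v * B) / G₀)),
    ⟨?_, EuclideanDomain.mod_lt _ hG₀⟩, ?_⟩
  · have hdiv := EuclideanDomain.div_add_mod (-v * B) G₀
    dsimp only
    linear_combination B * huv - G₁ * hdiv
  · suffices huniq : ∀ S T : K[X] × K[X], G₀ * S.2 - G₁ * S.1 = B → G₀ * T.2 - G₁ * T.1 = B →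
        S.1.degree < G₀.degree → T.1.degree < G₀.degree → S = T by
      rintro S ⟨hS, hSdeg⟩
      refine huniq _ _ hS ?_ hSdeg (EuclideanDomain.mod_lt _ hG₀)
      have hdiv := EuclideanDomain.div_add_mod (-v * B) G₀
      dsimp only
      linear_combination B * huv - G₁ * hdiv
    rintro ⟨S₀, S₁⟩ ⟨T₀, T₁⟩ hS hT hSdeg hTdeg
    dsimp only at hS hT hSdeg hTdeg
    have hdvd : G₀ ∣ S₀ - T₀ :=
      hcop.dvd_of_dvd_mul_left ⟨S₁ - T₁, by linear_combination hT - hS⟩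
    have hzero : S₀ - T₀ = 0 :=
      eq_zero_of_dvd_of_degree_lt hdvd
        ((degree_sub_le _ _).trans_lt (max_lt hSdeg hTdeg))
    have h₀ : S₀ = T₀ := sub_eq_zero.mp hzero
    subst h₀
    have h₁ : S₁ = T₁ := mul_left_cancel₀ hG₀ (by linear_combination hS - hT)
    rw [h₁]

/-- Linear Diophantine Degree-Reduction Corollary, clause (i): existence and
uniqueness of a causal complement to `(F₀, F₁)` for inhomogeneity `a·X^d̂`
that has multiplicity `M` and is degree-reducing modulo `M` in `F₀`.
The degree inequality `deg R₀ < deg F₀ − d_F + M` is stated in the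
subtraction-free form `deg R₀ + d_F < deg F₀ + M` in `WithBot ℕ`. -/
theorem degree_reduction_corollary_i
    (a : ℂ) (ha : a ≠ 0) (dhat dF M : ℕ)
    (hdF : dF ≤ dhat) (hM : M + dF ≤ dhat)
    (F₀ F₁ : Polynomial ℂ)
    (hgcd : Associated (EuclideanDomain.gcd F₀ F₁) (X ^ dF))
    (hF₀ : F₀ ≠ 0) :
    ∃! R : Polynomial ℂ × Polynomial ℂ,
      F₀ * R.2 - F₁ * R.1 = C a * X ^ dhat ∧
      X ^ M ∣ R.1 ∧ X ^ M ∣ R.2 ∧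
      R.1.degree + (dF : WithBot ℕ) < F₀.degree + (M : WithBot ℕ) := by
  obtain ⟨G₀, rfl⟩ : X ^ dF ∣ F₀ := hgcd.symm.dvd.trans (EuclideanDomain.gcd_dvd_left _ _)
  obtain ⟨G₁, rfl⟩ : X ^ dF ∣ F₁ := hgcd.symm.dvd.trans (EuclideanDomain.gcd_dvd_right _ _)
  have hG₀ : G₀ ≠ 0 := right_ne_zero_of_mul hF₀
  have hX : ∀ n : ℕ, (X ^ n : ℂ[X]) ≠ 0 := fun n => pow_ne_zero n X_ne_zero
  have hcop : IsCoprime G₀ G₁ := by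
    obtain ⟨w, hw⟩ := hgcd.dvd
    refine ⟨EuclideanDomain.gcdA (X ^ dF * G₀) (X ^ dF * G₁) * w,
      EuclideanDomain.gcdB (X ^ dF * G₀) (X ^ dF * G₁) * w, mul_left_cancel₀ (hX dF) ?_⟩
    rw [EuclideanDomain.gcd_eq_gcd_ab] at hw
    linear_combination -hw
  obtain ⟨k, rfl⟩ := Nat.exists_eq_add_of_le hM
  have heq : ∀ S₀ S₁ : ℂ[X],
      X ^ dF * G₀ * (X ^ M * S₁) - X ^ dF * G₁ * (X ^ M * S₀) = C a * X ^ (M + dF + k) ↔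
        G₀ * S₁ - G₁ * S₀ = C a * X ^ k := by
    intro S₀ S₁
    rw [← mul_right_inj' (hX (M + dF)) (b := G₀ * S₁ - G₁ * S₀)]
    ring_nf
  have hdeg : ∀ S₀ : ℂ[X],
      (X ^ M * S₀).degree + (dF : WithBot ℕ) < (X ^ dF * G₀).degree + (M : WithBot ℕ) ↔
        S₀.degree < G₀.degree := by
    intro S₀
    rw [degree_mul, degree_mul, degree_X_pow, degree_X_pow, degree_eq_natDegree hG₀]
    by_cases hS₀ : S₀ = 0
    · simp only [hS₀, degree_zero, WithBot.add_bot, WithBot.bot_add]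
      exact_mod_cast iff_of_true (WithBot.bot_lt_coe _) (WithBot.bot_lt_coe _)
    · rw [degree_eq_natDegree hS₀]
      norm_cast
      omega
  obtain ⟨⟨S₀, S₁⟩, ⟨hS, hSdeg⟩, huniq⟩ := existsUnique_of_isCoprime hcop hG₀ (C a * X ^ k)
  refine ⟨(X ^ M * S₀, X ^ M * S₁), ⟨(heq _ _).mpr hS, dvd_mul_right _ _, dvd_mul_right _ _,
    (hdeg _).mpr hSdeg⟩, ?_⟩
  rintro ⟨R₀, R₁⟩ ⟨hR, ⟨T₀, hT₀⟩, ⟨T₁, hT₁⟩, hRdeg⟩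
  dsimp only at hR hT₀ hT₁ hRdeg
  subst hT₀ hT₁
  have hT := huniq (T₀, T₁) ⟨(heq _ _).mp hR, (hdeg _).mp hRdeg⟩
  rw [Prod.mk.injEq] at hT
  rw [hT.1, hT.2]
end

section
/- Let a ∈ ℂ with a ≠ 0, and let d̂, d_F, M be integers with 0 ≤ d_F ≤ d̂ and 0 ≤ M ≤ d̂ − d_F. Let F₀, F₁ ∈ ℂ[X] be such that gcd(F₀, F₁) is associated to X^{d_F}, and suppose F₁ ≠ 0. Then there exists exactly one pair (R₀, R₁) of polynomials in ℂ[X] such that F₀·R₁ − F₁·R₀ = a·X^{d̂}, X^M divides both R₀ and R₁, and deg(R₁) < deg(F₁) − d_F + M (with deg 0 = ⊥). -/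
/-!
Since `X ^ dF` is a gcd of `F₀` and `F₁`, one has `Fᵢ = X ^ dF * Gᵢ` with `G₀, G₁` coprime.
Writing `Rᵢ = X ^ M * Sᵢ` and `dhat = M + dF + k`, the problem becomes: `G₀ S₁ - G₁ S₀ = a X ^ k`
with `deg S₁ < deg G₁`. This has exactly one solution: reduce a Bézout solution modulo `G₁`
for existence; for uniqueness, coprimality makes the difference of two candidates for `S₁`
a multiple of `G₁` of degree less than `deg G₁`, hence zero (`existsUnique_bezout_degree_lt`).
-/

open Polynomial

/-- For coprime `G₀, G₁` with `G₁ ≠ 0`, the equation `G₀ S₁ - G₁ S₀ = H` has exactly one solution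
with `deg S₁ < deg G₁`. -/
theorem existsUnique_bezout_degree_lt {K : Type*} [Field K] {G₀ G₁ : K[X]}
    (h : IsCoprime G₀ G₁) (hG : G₁ ≠ 0) (H : K[X]) :
    ∃! S : K[X] × K[X], G₀ * S.2 - G₁ * S.1 = H ∧ S.2.degree < G₁.degree := by
  obtain ⟨u, v, huv⟩ := id h
  -- `(-v H, u H)` is a solution; the multiple of `(G₀, G₁)` that reduces `u H` is subtracted.
  refine ⟨(-(v * H + G₀ * (u * H / G₁)), u * H % G₁),
    ⟨?_, EuclideanDomain.mod_lt _ hG⟩, ?_⟩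
  · have := EuclideanDomain.div_add_mod (u * H) G₁
    linear_combination G₀ * this + H * huv
  · rintro ⟨S₀, S₁⟩ ⟨hS, hdeg⟩
    have hmod := EuclideanDomain.div_add_mod (u * H) G₁
    have hdvd : G₁ ∣ S₁ - u * H % G₁ := by
      refine h.symm.dvd_of_dvd_mul_left ⟨S₀ + (v * H + G₀ * (u * H / G₁)), ?_⟩
      linear_combination hS - G₀ * hmod - H * huv
    have h1 : S₁ = u * H % G₁ := sub_eq_zero.mp <| eq_zero_of_dvd_of_degree_lt hdvd <|
      (degree_sub_le _ _).trans_lt (max_lt hdeg (EuclideanDomain.mod_lt _ hG))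
    refine Prod.ext (mul_left_cancel₀ hG ?_) h1
    simp only at hS ⊢
    linear_combination -hS + G₀ * h1 + G₀ * hmod + H * huv

/-- The degree bound is unaffected by the passage from `(R₁, F₁)` to `(S₁, G₁)`. -/
theorem degree_bound_iff {K : Type*} [Field K] (S G : K[X]) (M d : ℕ) :
    (X ^ M * S).degree + (d : WithBot ℕ) < (X ^ d * G).degree + (M : WithBot ℕ) ↔
      S.degree < G.degree := by
  rw [degree_mul, degree_mul, degree_X_pow, degree_X_pow]
  rcases eq_or_ne G 0 with rfl | hG
  · simp
  rcases eq_or_ne S 0 with rfl | hS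
  · simp only [degree_zero, WithBot.add_bot, WithBot.bot_add, degree_eq_natDegree hG]
    exact iff_of_true (WithBot.bot_lt_coe (d + G.natDegree + M)) (WithBot.bot_lt_coe _)
  · rw [degree_eq_natDegree hG, degree_eq_natDegree hS]
    norm_cast
    omega


/-- Linear Diophantine Degree-Reduction Corollary, clause (ii): existence and
uniqueness of a causal complement to `(F₀, F₁)` for inhomogeneity `a·X^d̂`
that has multiplicity `M` and is degree-reducing modulo `M` in `F₁`.
The degree inequality `deg R₁ < deg F₁ − d_F + M` is stated in the
subtraction-free form `deg R₁ + d_F < deg F₁ + M` in `WithBot ℕ`. -/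
theorem degree_reduction_corollary_ii
    (a : ℂ) (ha : a ≠ 0) (dhat dF M : ℕ)
    (hdF : dF ≤ dhat) (hM : M + dF ≤ dhat)
    (F₀ F₁ : Polynomial ℂ)
    (hgcd : Associated (EuclideanDomain.gcd F₀ F₁) (X ^ dF))
    (hF₁ : F₁ ≠ 0) :
    ∃! R : Polynomial ℂ × Polynomial ℂ,
      F₀ * R.2 - F₁ * R.1 = C a * X ^ dhat ∧
      X ^ M ∣ R.1 ∧ X ^ M ∣ R.2 ∧
      R.2.degree + (dF : WithBot ℕ) < F₁.degree + (M : WithBot ℕ) := by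
  obtain ⟨G₀, rfl⟩ := hgcd.symm.dvd.trans (EuclideanDomain.gcd_dvd_left F₀ F₁)
  obtain ⟨G₁, rfl⟩ := hgcd.symm.dvd.trans (EuclideanDomain.gcd_dvd_right _ F₁)
  have hX (n : ℕ) : (X ^ n : ℂ[X]) ≠ 0 := pow_ne_zero _ X_ne_zero
  have hG₁ : G₁ ≠ 0 := right_ne_zero_of_mul hF₁
  have hcop : IsCoprime G₀ G₁ := by
    obtain ⟨w, hw⟩ := hgcd
    rw [EuclideanDomain.gcd_eq_gcd_ab] at hw
    generalize EuclideanDomain.gcdA (X ^ dF * G₀) (X ^ dF * G₁) = u at hw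
    generalize EuclideanDomain.gcdB (X ^ dF * G₀) (X ^ dF * G₁) = v at hw
    refine ⟨u * w, v * w, mul_left_cancel₀ (hX dF) ?_⟩
    linear_combination hw
  obtain ⟨k, rfl⟩ := Nat.exists_eq_add_of_le hM
  obtain ⟨⟨S₀, S₁⟩, ⟨hS, hdeg⟩, huniq⟩ :=
    existsUnique_bezout_degree_lt hcop hG₁ (C a * X ^ k)
  refine ⟨(X ^ M * S₀, X ^ M * S₁), ⟨?_, dvd_mul_right _ _, dvd_mul_right _ _,
    (degree_bound_iff _ _ _ _).mpr hdeg⟩, ?_⟩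
  · simp only at hS ⊢
    rw [pow_add, pow_add]
    linear_combination X ^ M * X ^ dF * hS
  · rintro ⟨_, _⟩ ⟨hR, ⟨T₀, rfl⟩, ⟨T₁, rfl⟩, hRdeg⟩
    have hT : G₀ * T₁ - G₁ * T₀ = C a * X ^ k := by
      refine mul_left_cancel₀ (hX (M + dF)) ?_
      simp only [pow_add] at hR ⊢
      linear_combination hR
    have heq := huniq (T₀, T₁) ⟨hT, (degree_bound_iff _ _ _ _).mp hRdeg⟩
    obtain ⟨rfl, rfl⟩ := Prod.mk.inj heq
    rfl
end

section
/- Let a ∈ ℂ with a ≠ 0, and let d̂, d_F, M be integers with 0 ≤ d_F ≤ d̂ and 0 ≤ M ≤ d̂ − d_F. Let F₀, F₁ ∈ ℂ[X] be nonzero with gcd(F₀, F₁) associated to X^{d_F}. Let (R₀, R₁) be the unique causal complement to (F₀,F₁) for a·X^{d̂} of multiplicity M with deg(R₀) < deg(F₀) − d_F + M, and let (R₀′, R₁′) be the unique causal complement of multiplicity M with deg(R₁′) < deg(F₁) − d_F + M. Then (R₀, R₁) = (R₀′, R₁′) if and only if d̂ < deg(F₀) + deg(F₁) − d_F + M. 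-/
open Polynomial

/-!
Write `N = deg F₀ + deg F₁ + M`. The two degree-reduction hypotheses say that
`deg (F₁ R₀) + d_F < N` and `deg (F₀ R₁') + d_F < N`. If the complements coincide, both products on
the left of `F₀ R₁ - F₁ R₀ = a X ^ d̂` satisfy the bound, hence so does `a X ^ d̂`, i.e.
`d̂ + d_F < N`. Conversely, if `d̂ + d_F < N`, then `F₀ R₁ = a X ^ d̂ + F₁ R₀` satisfies the bound,
so `(R₀, R₁)` is also degree-reducing in `F₁`, and the uniqueness of such complements
(`eq_zero_of_homogeneous`, applied to the difference) gives the equality.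
-/

/-- Uniqueness of degree-reducing complements, in homogeneous form. By Bézout,
`X ^ dF * D₁ = (u F₀ + v F₁) D₁ = F₁ (u D₀ + v D₁)` is a multiple of `F₁ * X ^ M`, which has larger
degree. -/
lemma eq_zero_of_homogeneous {dF M : ℕ} {F₀ F₁ D₀ D₁ : Polynomial ℂ} (hF₁ : F₁ ≠ 0)
    (hgcd : Associated (EuclideanDomain.gcd F₀ F₁) (X ^ dF))
    (hD : F₀ * D₁ = F₁ * D₀) (h0 : X ^ M ∣ D₀) (h1 : X ^ M ∣ D₁)
    (hdeg : (D₁ * X ^ dF).degree < (F₁ * X ^ M).degree) : D₀ = 0 ∧ D₁ = 0 := by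
  obtain ⟨w, hw⟩ := hgcd
  have hdvd : F₁ * X ^ M ∣ D₁ * X ^ dF := by
    have key : D₁ * X ^ dF = F₁ * (D₀ * (EuclideanDomain.gcdA F₀ F₁ * (w : ℂ[X]))
        + D₁ * (EuclideanDomain.gcdB F₀ F₁ * (w : ℂ[X]))) := by
      rw [← hw, EuclideanDomain.gcd_eq_gcd_ab]
      linear_combination (EuclideanDomain.gcdA F₀ F₁ * (w : ℂ[X])) * hD
    rw [key]
    exact mul_dvd_mul_left _ (dvd_add (h0.mul_right _) (h1.mul_right _))
  have hD1 : D₁ = 0 := by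
    simpa using eq_zero_of_dvd_of_degree_lt hdvd hdeg
  refine ⟨?_, hD1⟩
  simpa [hD1, hF₁] using hD.symm

/-- Multiplying a degree inequality through by a nonzero polynomial. -/
lemma degree_mul_lt_iff {A F G : Polynomial ℂ} (hG : G ≠ 0) (m n : ℕ) :
    A.degree + (m : WithBot ℕ) < F.degree + (n : WithBot ℕ) ↔
      (G * A * X ^ m).degree < (G * F * X ^ n).degree := by
  have hb : G.degree ≠ ⊥ := degree_ne_bot.mpr hG
  simp only [degree_mul, degree_X_pow, add_assoc]
  exact (WithBot.add_lt_add_iff_left hb).symm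

/-- Linear Diophantine Degree-Reduction Corollary, clause (iii): the two unique
degree-reducing causal complements (the one degree-reducing modulo `M` in `F₀`
and the one degree-reducing modulo `M` in `F₁`) coincide if and only if
`d̂ < deg F₀ + deg F₁ − d_F + M`, stated in the subtraction-free form
`d̂ + d_F < deg F₀ + deg F₁ + M` in `WithBot ℕ`. -/
theorem degree_reduction_corollary_iii
    (a : ℂ) (ha : a ≠ 0) (dhat dF M : ℕ)
    (hdF : dF ≤ dhat) (hM : M + dF ≤ dhat)
    (F₀ F₁ : Polynomial ℂ) (hF₀ : F₀ ≠ 0) (hF₁ : F₁ ≠ 0)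
    (hgcd : Associated (EuclideanDomain.gcd F₀ F₁) (X ^ dF))
    (R₀ R₁ R₀' R₁' : Polynomial ℂ)
    (hR : F₀ * R₁ - F₁ * R₀ = C a * X ^ dhat)
    (hRM0 : X ^ M ∣ R₀) (hRM1 : X ^ M ∣ R₁)
    (hRdeg : R₀.degree + (dF : WithBot ℕ) < F₀.degree + (M : WithBot ℕ))
    (hR' : F₀ * R₁' - F₁ * R₀' = C a * X ^ dhat)
    (hR'M0 : X ^ M ∣ R₀') (hR'M1 : X ^ M ∣ R₁')
    (hR'deg : R₁'.degree + (dF : WithBot ℕ) < F₁.degree + (M : WithBot ℕ)) :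
    (R₀, R₁) = (R₀', R₁') ↔
      ((dhat : WithBot ℕ) + (dF : WithBot ℕ) < F₀.degree + F₁.degree + (M : WithBot ℕ)) := by
  have hb0 := (degree_mul_lt_iff hF₁ dF M).mp hRdeg
  have hb1 := (degree_mul_lt_iff hF₀ dF M).mp hR'deg
  rw [mul_comm F₁ F₀] at hb0
  have hN : ((dhat : WithBot ℕ) + (dF : WithBot ℕ) < F₀.degree + F₁.degree + (M : WithBot ℕ)) ↔
      (C a * X ^ dhat * X ^ dF).degree < (F₀ * F₁ * X ^ M).degree := by
    simp only [degree_mul, degree_X_pow, degree_C ha, zero_add]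
  rw [hN]
  constructor
  · intro h
    obtain ⟨rfl, rfl⟩ := Prod.mk.inj h
    rw [← hR, sub_mul]
    exact (degree_sub_le _ _).trans_lt (max_lt hb1 hb0)
  · intro h
    have hR1 : (F₀ * R₁ * X ^ dF).degree < (F₀ * F₁ * X ^ M).degree := by
      rw [eq_add_of_sub_eq hR, add_mul]
      exact (degree_add_le _ _).trans_lt (max_lt h hb0)
    have hdiff : ((R₁ - R₁') * X ^ dF).degree < (F₁ * X ^ M).degree := by
      have hsub : (F₀ * (R₁ - R₁') * X ^ dF).degree < (F₀ * F₁ * X ^ M).degree := by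
        rw [mul_sub, sub_mul]
        exact (degree_sub_le _ _).trans_lt (max_lt hR1 hb1)
      simpa only [degree_mul, degree_X_pow] using (degree_mul_lt_iff hF₀ dF M).mpr hsub
    obtain ⟨h0, h1⟩ := eq_zero_of_homogeneous (D₀ := R₀ - R₀') hF₁ hgcd
      (by linear_combination hR - hR') (dvd_sub hRM0 hR'M0) (dvd_sub hRM1 hR'M1) hdiff
    rw [sub_eq_zero.mp h0, sub_eq_zero.mp h1]
end

section
/- (Causal Complementation Theorem) Let a ∈ ℂ with a ≠ 0, and let d̂, d_F, M be integers with 0 ≤ d_F ≤ d̂ and 0 ≤ M ≤ d̂ − d_F. Let F₀, F₁ ∈ ℂ[X] with gcd(F₀, F₁) associated to X^{d_F}, and suppose E₀, E₁ ∈ ℂ[X] satisfy F₀·E₁ − F₁·E₀ = a·X^{d̂}. Define the coprime parts F̃ⱼ := Fⱼ / X^{d_F} for j = 0,1, and let ℓ ∈ {0,1} be an index such that X does not divide F̃_ℓ. Then there exists a unique polynomial S ∈ ℂ[X] such that the remainders Rⱼ := Eⱼ − S·F̃ⱼ (j = 0,1) satisfy: X^M divides both R₀ and R₁, and deg(R_ℓ)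 < deg(F_ℓ) − d_F + M; moreover this pair (R₀, R₁) also satisfies F₀·R₁ − F₁·R₀ = a·X^{d̂} and is the unique causal complement to (F₀,F₁) for a·X^{d̂} that is degree-reducing modulo M in F_ℓ. -/
open Polynomial

/-!
After cancelling `X ^ dF`, the pair `(Ft 0, Ft 1)` is coprime and `E` solves
`Ft 0 * E 1 - Ft 1 * E 0 = a * X ^ (dhat - dF)`. By Bezout, every other solution has the form
`E j - T * Ft j`, so the theorem reduces to finding and pinning down `T`.

Since `X ∤ Ft ℓ`, the polynomial `Ft ℓ` is a unit modulo `X ^ M`, so `E ℓ` can be made divisible by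
`X ^ M` by subtracting a multiple of `Ft ℓ`; dividing the resulting cofactor of `X ^ M` by `Ft ℓ`
then brings the degree below `deg (Ft ℓ) + M` (`exists_quotient`). Two such quotients differ by a
multiple of `X ^ M` that is too small in degree to be nonzero (`quotient_unique`). Because
`M ≤ dhat - dF`, divisibility of the remainder with index `ℓ` by `X ^ M` passes to the other one
through the Diophantine equation (`dvd_other`).
-/

lemma isCoprime_X_pow {f : ℂ[X]} (hf : ¬ X ∣ f) (M : ℕ) : IsCoprime (X ^ M) f :=
  ((irreducible_X.coprime_iff_not_dvd).2 hf).pow_left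

lemma exists_quotient {f : ℂ[X]} (hf : ¬ X ∣ f) (e : ℂ[X]) (M : ℕ) :
    ∃ S : ℂ[X], X ^ M ∣ e - S * f ∧ (e - S * f).degree < f.degree + (M : WithBot ℕ) := by
  have hf0 : f ≠ 0 := by
    rintro rfl
    exact hf (dvd_zero _)
  obtain ⟨v, u, huv⟩ := isCoprime_X_pow hf M
  have hdiv := EuclideanDomain.div_add_mod (v * e) f
  -- Modulo `X ^ M`, `u` inverts `f`; the correction term divides the cofactor `v * e` by `f`.
  have key : e - (u * e + X ^ M * (v * e / f)) * f = X ^ M * (v * e % f) := by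
    linear_combination (-e) * huv - X ^ M * hdiv
  refine ⟨u * e + X ^ M * (v * e / f), ?_, ?_⟩
  · rw [key]
    exact dvd_mul_right _ _
  · rw [key, degree_mul, degree_X_pow, add_comm]
    exact WithBot.add_lt_add_right (WithBot.natCast_ne_bot M) (EuclideanDomain.mod_lt _ hf0)

lemma quotient_unique {f : ℂ[X]} (hf : ¬ X ∣ f) {e S T : ℂ[X]} {M : ℕ}
    (hS : X ^ M ∣ e - S * f) (hS' : (e - S * f).degree < f.degree + (M : WithBot ℕ))
    (hT : X ^ M ∣ e - T * f) (hT' : (e - T * f).degree < f.degree + (M : WithBot ℕ)) :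
    S = T := by
  have hd : (e - T * f) - (e - S * f) = (S - T) * f := by ring
  have h1 : X ^ M ∣ S - T := (isCoprime_X_pow hf M).dvd_of_dvd_mul_right (hd ▸ dvd_sub hT hS)
  have h2 : ((S - T) * f).degree < f.degree + (M : WithBot ℕ) :=
    hd ▸ (degree_sub_le _ _).trans_lt (max_lt hT' hS')
  have h3 : (X ^ M * f).degree = f.degree + (M : WithBot ℕ) := by
    rw [degree_mul, degree_X_pow, add_comm]
  have h4 : (S - T) * f = 0 :=
    eq_zero_of_dvd_of_degree_lt (mul_dvd_mul_right h1 f) (h3.symm ▸ h2)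
  have hf0 : f ≠ 0 := by
    rintro rfl
    exact hf (dvd_zero _)
  exact sub_eq_zero.1 ((mul_eq_zero.1 h4).resolve_right hf0)

lemma dvd_other {f g r s : ℂ[X]} (hf : ¬ X ∣ f) {M : ℕ}
    (h : X ^ M ∣ f * s - g * r) (hr : X ^ M ∣ r) : X ^ M ∣ s :=
  (isCoprime_X_pow hf M).dvd_of_dvd_mul_left
    ((dvd_sub_left (hr.mul_left g)).1 h)

/-- Causal Complementation Theorem: given a causal complement `(E 0, E 1)` to
`(F 0, F 1)` for inhomogeneity `a·X^d̂`, with coprime parts `F j = X^d_F * Ft j`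
and an index `ℓ` for which `Ft ℓ` is left-justified (`X ∤ Ft ℓ`), there is a
unique quotient polynomial `S` whose remainders `R j := E j − S·Ft j` form the
unique causal complement to `(F 0, F 1)` for `a·X^d̂` that is degree-reducing
modulo `M` in `F ℓ`.  Degree inequalities `deg R < deg F_ℓ − d_F + M` are stated
in the subtraction-free form `deg R + d_F < deg F_ℓ + M` in `WithBot ℕ`. -/
theorem causal_complementation_theorem
    (a : ℂ) (ha : a ≠ 0) (dhat dF M : ℕ)
    (hdF : dF ≤ dhat) (hM : M + dF ≤ dhat)
    (F Ft E : Fin 2 → Polynomial ℂ)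
    (hgcd : Associated (EuclideanDomain.gcd (F 0) (F 1)) (X ^ dF))
    (hFt : ∀ j, F j = X ^ dF * Ft j)
    (ℓ : Fin 2) (hℓ : ¬ (X ∣ Ft ℓ))
    (hE : F 0 * E 1 - F 1 * E 0 = C a * X ^ dhat) :
    ∃! S : Polynomial ℂ,
      (∀ j, X ^ M ∣ (E j - S * Ft j)) ∧
      (E ℓ - S * Ft ℓ).degree + (dF : WithBot ℕ) < (F ℓ).degree + (M : WithBot ℕ) ∧
      F 0 * (E 1 - S * Ft 1) - F 1 * (E 0 - S * Ft 0) = C a * X ^ dhat ∧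
      (∀ R : Fin 2 → Polynomial ℂ,
        F 0 * R 1 - F 1 * R 0 = C a * X ^ dhat →
        (∀ j, X ^ M ∣ R j) →
        (R ℓ).degree + (dF : WithBot ℕ) < (F ℓ).degree + (M : WithBot ℕ) →
        ∀ j, R j = E j - S * Ft j) := by
  have hX : (X ^ dF : ℂ[X]) ≠ 0 := pow_ne_zero _ X_ne_zero
  obtain ⟨k, rfl⟩ := Nat.exists_eq_add_of_le hdF
  have hMk : M ≤ k := by omega
  -- The Diophantine equation with the common factor `X ^ dF` cancelled.
  have cancel : ∀ r s : ℂ[X], F 0 * s - F 1 * r = C a * X ^ (dF + k) →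
      Ft 0 * s - Ft 1 * r = C a * X ^ k := by
    intro r s h
    apply mul_left_cancel₀ hX
    rw [hFt 0, hFt 1, pow_add] at h
    linear_combination h
  obtain ⟨u, v, huv⟩ : IsCoprime (Ft 0) (Ft 1) := by
    obtain ⟨w, hw⟩ := hgcd
    rw [EuclideanDomain.gcd_eq_gcd_ab] at hw
    refine ⟨EuclideanDomain.gcdA (F 0) (F 1) * w, EuclideanDomain.gcdB (F 0) (F 1) * w, ?_⟩
    apply mul_left_cancel₀ hX
    generalize EuclideanDomain.gcdA (F 0) (F 1) = A at *
    generalize EuclideanDomain.gcdB (F 0) (F 1) = B at *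
    rw [hFt 0, hFt 1] at hw
    linear_combination hw
  have hdeg : ∀ r : ℂ[X], r.degree + (dF : WithBot ℕ) < (F ℓ).degree + (M : WithBot ℕ) ↔
      r.degree < (Ft ℓ).degree + (M : WithBot ℕ) := by
    intro r
    rw [hFt ℓ, degree_mul, degree_X_pow, add_assoc, add_comm (dF : WithBot ℕ)]
    exact WithBot.add_lt_add_iff_right (WithBot.natCast_ne_bot dF)
  have hsol : ∀ S : ℂ[X],
      F 0 * (E 1 - S * Ft 1) - F 1 * (E 0 - S * Ft 0) = C a * X ^ (dF + k) := by
    intro S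
    rw [← hE, hFt 0, hFt 1]
    ring
  obtain ⟨S, hS, hS'⟩ := exists_quotient hℓ (E ℓ) M
  refine ⟨S, ⟨?_, (hdeg _).2 hS', hsol S, ?_⟩, ?_⟩
  · have hk : X ^ M ∣ C a * X ^ k := (pow_dvd_pow X hMk).mul_left _
    have h := cancel _ _ (hsol S)
    have h0 : X ^ M ∣ Ft 0 * (E 1 - S * Ft 1) - Ft 1 * (E 0 - S * Ft 0) := h ▸ hk
    rw [Fin.forall_fin_two]
    fin_cases ℓ
    · exact ⟨hS, dvd_other hℓ h0 hS⟩
    · exact ⟨dvd_other hℓ ((dvd_sub_comm).1 h0) hS, hS⟩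
  · intro R hR hRM hRd
    have h1 := cancel _ _ hR
    have h2 := cancel _ _ hE
    -- The difference of two solutions is `T` times the coprime pair, with `T` read off by Bezout.
    have hT : ∀ j, R j = E j - (u * (E 0 - R 0) + v * (E 1 - R 1)) * Ft j := by
      rw [Fin.forall_fin_two]
      constructor
      · linear_combination (E 0 - R 0) * huv + v * (h2 - h1)
      · linear_combination (E 1 - R 1) * huv + u * (h1 - h2)
    have hST : S = u * (E 0 - R 0) + v * (E 1 - R 1) :=
      quotient_unique hℓ hS hS' (hT ℓ ▸ hRM ℓ) (hT ℓ ▸ (hdeg _).1 hRd)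
    rw [hST]
    exact hT
  · rintro T ⟨hT, hTd, -⟩
    exact quotient_unique hℓ (hT ℓ) ((hdeg _).1 hTd) hS hS'
end

section
/- Let a ∈ ℂ with a ≠ 0, and let d̂, d_F, M be integers with 0 ≤ d_F ≤ d̂ and 0 ≤ M ≤ d̂ − d_F. Let F₀, F₁ ∈ ℂ[X] with gcd(F₀, F₁) associated to X^{d_F}, let ℓ ∈ {0,1} with F_ℓ ≠ 0 and X ∤ (F_ℓ / X^{d_F}), and let (R₀, R₁) be the unique causal complement to (F₀,F₁) for a·X^{d̂} that is degree-reducing modulo M in F_ℓ. If X^{M+k} divides R_ℓ for some integer k > 0, then X^{M+k} divides R_{1−ℓ} if and only if d̂ − d_F ≥ M + k; and in that case (R₀,R₁) has multiplicity M+k and is the unique causal complement to (F₀,F₁) for a·X^{d̂} that is degree-reducing modulo M+k in F_ℓ. -/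
open Polynomial

/-!
Dividing `F 0`, `F 1` by their greatest common divisor `X ^ dF` gives coprime polynomials
`P` (the one belonging to `ℓ`) and `Q` with `P * S - Q * T = c * X ^ e`, where `T = R ℓ`,
`S = R (1 - ℓ)`, `c = ± a` and `e = dhat - dF`.

If `X ^ n ∣ T` with `n = M + k`, then `X ^ n ∣ S` forces `X ^ n ∣ c * X ^ e`, so `n ≤ e`;
conversely `n ≤ e` gives `X ^ n ∣ P * S`, hence `X ^ n ∣ S` because `X` is a prime not
dividing `P` (`pow_dvd_iff`). For uniqueness, two solutions satisfy
`P * (S' - S) = Q * (T' - T)`, so both `P` and `X ^ n` divide `T' - T`; these are coprime, and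
the degree bound `deg (T' - T) < deg P + n` leaves only `T' = T` (`reduced_unique`).
The theorem is the case `ℓ = 0` or `ℓ = 1` of `core`, which is symmetric in the two filters.
-/

namespace CCT

theorem pow_dvd_iff {P Q S T : ℂ[X]} {c : ℂ} {e n : ℕ} (hc : c ≠ 0) (hX : ¬ X ∣ P)
    (h : P * S - Q * T = C c * X ^ e) (hT : X ^ n ∣ T) : X ^ n ∣ S ↔ n ≤ e := by
  have hunit : IsUnit (C c : ℂ[X]) := isUnit_C.mpr hc.isUnit
  constructor
  · intro hS
    have h1 : (X : ℂ[X]) ^ n ∣ C c * X ^ e := h ▸ dvd_sub (hS.mul_left P) (hT.mul_left Q)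
    rw [hunit.dvd_mul_left] at h1
    exact (pow_dvd_pow_iff X_ne_zero not_isUnit_X).mp h1
  · intro hn
    have h1 : X ^ n ∣ P * S := by
      rw [sub_eq_iff_eq_add.mp h]
      exact dvd_add ((pow_dvd_pow X hn).mul_left _) (hT.mul_left Q)
    exact prime_X.pow_dvd_of_dvd_mul_left n hX h1

theorem reduced_unique {P Q S T S' T' : ℂ[X]} {n : ℕ} (hPQ : IsCoprime P Q)
    (hX : ¬ X ∣ P) (h : P * S' - Q * T' = P * S - Q * T)
    (hT : X ^ n ∣ T) (hT' : X ^ n ∣ T')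
    (hd : T.degree < P.degree + (n : WithBot ℕ))
    (hd' : T'.degree < P.degree + (n : WithBot ℕ)) : S' = S ∧ T' = T := by
  have hP0 : P ≠ 0 := by
    rintro rfl
    exact hX (dvd_zero X)
  have h1 : P * (S' - S) = Q * (T' - T) := by linear_combination h
  have h2 : P ∣ T' - T := hPQ.dvd_of_dvd_mul_left ⟨_, h1.symm⟩
  have hcop : IsCoprime P (X ^ n) :=
    ((prime_X.irreducible.coprime_iff_not_dvd).mpr hX).symm.pow_right
  have h3 : P * X ^ n ∣ T' - T := hcop.mul_dvd h2 (dvd_sub hT' hT)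
  have h4 : T' - T = 0 := by
    refine eq_zero_of_dvd_of_degree_lt h3 ?_
    rw [degree_mul, degree_X_pow]
    exact (degree_sub_le _ _).trans_lt (max_lt hd' hd)
  rw [h4, mul_zero] at h1
  exact ⟨sub_eq_zero.mp ((mul_eq_zero.mp h1).resolve_left hP0), sub_eq_zero.mp h4⟩

/-- Cancelling the common factor `X ^ d` turns the degree condition into one on the cofactor. -/
theorem degree_reduce {P T : ℂ[X]} {d n : ℕ}
    (h : T.degree + (d : WithBot ℕ) < (X ^ d * P).degree + (n : WithBot ℕ)) :
    T.degree < P.degree + (n : WithBot ℕ) := by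
  rw [degree_mul, degree_X_pow, add_assoc, add_comm (d : WithBot ℕ)] at h
  exact lt_of_add_lt_add_right h

/-- The statement with the two filters named `A` (degree-reducing side) and `B`, and with an
arbitrary nonzero constant `c`, so that swapping the filters only changes the sign of `c`. -/
theorem core {A B P S T : ℂ[X]} {c : ℂ} {dhat d M k : ℕ} (hc : c ≠ 0) (hd : d ≤ dhat)
    (hg : ∃ u v, A * u + B * v = X ^ d) (hB : X ^ d ∣ B) (hA : A = X ^ d * P)
    (hX : ¬ X ∣ P) (h : A * S - B * T = C c * X ^ dhat)
    (hdeg : T.degree + (d : WithBot ℕ) < A.degree + (M : WithBot ℕ))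
    (hT : X ^ (M + k) ∣ T) :
    (X ^ (M + k) ∣ S ↔ M + k + d ≤ dhat) ∧
    T.degree + (d : WithBot ℕ) < A.degree + ((M + k : ℕ) : WithBot ℕ) ∧
    ∀ S' T' : ℂ[X], A * S' - B * T' = C c * X ^ dhat → X ^ (M + k) ∣ T' →
      T'.degree + (d : WithBot ℕ) < A.degree + ((M + k : ℕ) : WithBot ℕ) →
      S' = S ∧ T' = T := by
  obtain ⟨Q, rfl⟩ := hB
  subst hA
  obtain ⟨e, rfl⟩ := Nat.exists_eq_add_of_le hd
  have hXd : (X : ℂ[X]) ^ d ≠ 0 := pow_ne_zero _ X_ne_zero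
  have hcop : IsCoprime P Q := by
    obtain ⟨u, v, huv⟩ := hg
    refine ⟨u, v, mul_left_cancel₀ hXd ?_⟩
    linear_combination huv
  have hred : ∀ S T : ℂ[X], X ^ d * P * S - X ^ d * Q * T = C c * X ^ (d + e) →
      P * S - Q * T = C c * X ^ e := fun S T h => mul_left_cancel₀ hXd (by
    rw [pow_add] at h
    linear_combination h)
  have hdeg' : T.degree + (d : WithBot ℕ) <
      (X ^ d * P).degree + ((M + k : ℕ) : WithBot ℕ) := by
    refine hdeg.trans_le ?_
    gcongr
    exact Nat.le_add_right M k
  refine ⟨?_, hdeg', fun S' T' h' hT' hd' => ?_⟩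
  · rw [pow_dvd_iff hc hX (hred _ _ h) hT]
    omega
  · exact reduced_unique hcop hX ((hred _ _ h').trans (hred _ _ h).symm) hT hT'
      (degree_reduce hdeg') (degree_reduce hd')

end CCT

/-- Remark following the Causal Complementation Theorem: if the unique causal
complement `(R 0, R 1)` to `(F 0, F 1)` for `a·X^d̂` that is degree-reducing
modulo `M` in `F ℓ` has `X^(M+k) ∣ R ℓ` for some `k > 0`, then
`X^(M+k) ∣ R (1−ℓ)` iff `d̂ − d_F ≥ M + k`, in which case `(R 0, R 1)` has
multiplicity `M + k` and is the unique causal complement that is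
degree-reducing modulo `M + k` in `F ℓ`.  Degree inequalities
`deg R < deg F_ℓ − d_F + M'` are stated in the subtraction-free form
`deg R + d_F < deg F_ℓ + M'` in `WithBot ℕ`, and `d̂ − d_F ≥ M + k` as
`M + k + d_F ≤ d̂`. -/
theorem cct_remark
    (a : ℂ) (ha : a ≠ 0) (dhat dF M k : ℕ) (hk : 0 < k)
    (hdF : dF ≤ dhat) (hM : M + dF ≤ dhat)
    (F R : Fin 2 → Polynomial ℂ)
    (hgcd : Associated (EuclideanDomain.gcd (F 0) (F 1)) (X ^ dF))
    (ℓ : Fin 2) (hFℓ : F ℓ ≠ 0)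
    (Ftℓ : Polynomial ℂ) (hFtℓ : F ℓ = X ^ dF * Ftℓ) (hnd : ¬ (X ∣ Ftℓ))
    (hR : F 0 * R 1 - F 1 * R 0 = C a * X ^ dhat)
    (hRM : ∀ j, X ^ M ∣ R j)
    (hRdeg : (R ℓ).degree + (dF : WithBot ℕ) < (F ℓ).degree + (M : WithBot ℕ))
    (hdiv : X ^ (M + k) ∣ R ℓ) :
    (X ^ (M + k) ∣ R (1 - ℓ) ↔ M + k + dF ≤ dhat) ∧
    (M + k + dF ≤ dhat →
      ((∀ j, X ^ (M + k) ∣ R j) ∧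
       (R ℓ).degree + (dF : WithBot ℕ) < (F ℓ).degree + ((M + k : ℕ) : WithBot ℕ) ∧
       (∀ R' : Fin 2 → Polynomial ℂ,
         F 0 * R' 1 - F 1 * R' 0 = C a * X ^ dhat →
         (∀ j, X ^ (M + k) ∣ R' j) →
         (R' ℓ).degree + (dF : WithBot ℕ) < (F ℓ).degree + ((M + k : ℕ) : WithBot ℕ) →
         ∀ j, R' j = R j))) := by
  obtain ⟨w, hw⟩ := id hgcd
  have hdvd0 : X ^ dF ∣ F 0 :=
    hgcd.symm.dvd.trans (EuclideanDomain.gcd_dvd_left _ _)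
  have hdvd1 : X ^ dF ∣ F 1 :=
    hgcd.symm.dvd.trans (EuclideanDomain.gcd_dvd_right _ _)
  have hbez : F 0 * (EuclideanDomain.gcdA (F 0) (F 1) * (w : ℂ[X])) +
      F 1 * (EuclideanDomain.gcdB (F 0) (F 1) * (w : ℂ[X])) = X ^ dF := by
    rw [← hw, EuclideanDomain.gcd_eq_gcd_ab (F 0) (F 1)]
    ring
  obtain rfl | rfl : ℓ = 0 ∨ ℓ = 1 := by omega
  · obtain ⟨h1, h2, h3⟩ := CCT.core ha hdF ⟨_, _, hbez⟩ hdvd1 hFtℓ hnd hR hRdeg hdiv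
    refine ⟨h1, fun hle => ⟨Fin.forall_fin_two.mpr ⟨hdiv, h1.mpr hle⟩, h2,
      fun R' hR' hdiv' hdeg' => ?_⟩⟩
    obtain ⟨hS, hT⟩ := h3 _ _ hR' (hdiv' 0) hdeg'
    exact Fin.forall_fin_two.mpr ⟨hT, hS⟩
  · have hswap : ∀ R : Fin 2 → ℂ[X], F 0 * R 1 - F 1 * R 0 = C a * X ^ dhat →
        F 1 * R 0 - F 0 * R 1 = C (-a) * X ^ dhat := fun R h => by
      rw [C_neg]
      linear_combination -h
    obtain ⟨h1, h2, h3⟩ := CCT.core (neg_ne_zero.mpr ha) hdF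
      ⟨_, _, (add_comm _ _).trans hbez⟩ hdvd0 hFtℓ hnd (hswap R hR) hRdeg hdiv
    refine ⟨h1, fun hle => ⟨Fin.forall_fin_two.mpr ⟨h1.mpr hle, hdiv⟩, h2,
      fun R' hR' hdiv' hdeg' => ?_⟩⟩
    obtain ⟨hS, hT⟩ := h3 _ _ (hswap R' hR') (hdiv' 1) hdeg'
    exact Fin.forall_fin_two.mpr ⟨hS, hT⟩
end

section
/- Let Q₀ be a 2×2 matrix over ℂ[X] with coprime rows and coprime columns, and suppose Q₀ = diag(κ₀,κ₁)·U_{N−1}Λ_{N−1}⋯U₁Λ₁U₀·P₀ and Q₀ = diag(κ₀′,κ₁′)·U′_{N−1}Λ′_{N−1}⋯U′₁Λ′₁U′₀·P₀′ are two left degree-lifting standard causal lifting cascades with the same number N of lifting steps. If the two cascades have the same initial update characteristic χ(U₀) = χ(U′₀), the same determinantal delay degrees deg|Λ_n| = deg|Λ′_n| for 1 ≤ n ≤ N−2, and the same degree signatures sig(P_n) = sig(P′_n) for 0 ≤ n ≤ N−1, then the corresponding factors are identical: κ₀ = κ₀′, κ₁ = κ₁′, P₀ = P₀′, U_n = U′_n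 for all 0 ≤ n ≤ N−1, and Λ_n = Λ′_n for all 1 ≤ n ≤ N−1. -/
/-!
The two cascades are compared from the left end, peeling off one lifting step at a time.

*Delays.* Each step multiplies the determinant by `X ^ m n`, so `deg |Q₀| = ∑ m n`
(`natDegree_det_cascade`); since all but the last delay agree, the last ones agree too.

*Initial matrices.* `I` and `J` are degree-lifting in different columns, so the signature at
`n = 0` determines `P₀`.

*Peeling* (`peel_step`). Suppose the partial products after step `n` agree up to a constant scaling
`c r` of row `r`. Subtracting the two expressions for the updated row gives
`X ^ m * (f - c χ • f') = w • e'`, where `f, f'` are the rows about to be updated, `e'` is the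
other row of `P' n`, and `w` is a combination of the two lifting filters. The row `e'` is
coprime, so `X ^ m ∣ w` and `f - c χ • f'` is a polynomial multiple of `e'`. In a column where both
partial products are degree-lifting, `f` and `f'` have degree smaller than `e'`, so this
multiple, hence `w`, is zero. Thus the previous partial products agree up to the same
scaling `c`, and the lifting filters agree up to a ratio of the scaling constants.

At `n = 0` both partial products equal `P₀`, whose rows are nonzero, so `c = 1`
and all factors coincide.
-/

open Polynomial

/-- A lifting matrix with update characteristic `χ` and lifting filter `u`:
upper-triangular for `χ = 0`, lower-triangular for `χ = 1`. -/
noncomputable def liftMat (χ : Fin 2) (u : Polynomial ℂ) :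
    Matrix (Fin 2) (Fin 2) (Polynomial ℂ) :=
  if χ = 0 then !![1, u; 0, 1] else !![1, 0; u, 1]

/-- A diagonal delay matrix with update characteristic `χ` and delay `m`:
`diag(X^m, 1)` for `χ = 0`, `diag(1, X^m)` for `χ = 1`. -/
noncomputable def delayMat (χ : Fin 2) (m : ℕ) :
    Matrix (Fin 2) (Fin 2) (Polynomial ℂ) :=
  if χ = 0 then Matrix.diagonal ![Polynomial.X ^ m, 1]
  else Matrix.diagonal ![1, Polynomial.X ^ m]

/-- `degLiftIn P χ n j`: the `n`-th right partial product `P n` of a cascade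
with update characteristics `χ` is degree-lifting in column `j`: its rows are
coprime and the entry in row `χ_{n−1}` (with `χ_{−1} := 1 − χ₀`) of column `j`
has strictly larger degree than the other entry of column `j`. -/
def degLiftIn (P : ℕ → Matrix (Fin 2) (Fin 2) (Polynomial ℂ)) (χ : ℕ → Fin 2)
    (n : ℕ) (j : Fin 2) : Prop :=
  (∀ r : Fin 2, IsCoprime (P n r 0) (P n r 1)) ∧
  (P n (1 - (if n = 0 then 1 - χ 0 else χ (n - 1))) j).degree <
    (P n (if n = 0 then 1 - χ 0 else χ (n - 1)) j).degree

lemma step_apply_updated (χ : Fin 2) (u : ℂ[X]) (m : ℕ) (A : Matrix (Fin 2) (Fin 2) ℂ[X])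
    (k : Fin 2) :
    (liftMat χ u * delayMat χ m * A) χ k = X ^ m * A χ k + u * A (1 - χ) k := by
  fin_cases χ <;>
    simp [liftMat, delayMat, Matrix.mul_apply, Matrix.vecMul_diagonal, Fin.sum_univ_two, add_comm]

lemma step_apply_kept (χ : Fin 2) (u : ℂ[X]) (m : ℕ) (A : Matrix (Fin 2) (Fin 2) ℂ[X])
    (k : Fin 2) :
    (liftMat χ u * delayMat χ m * A) (1 - χ) k = A (1 - χ) k := by
  fin_cases χ <;>
    simp [liftMat, delayMat, Matrix.mul_apply, Matrix.vecMul_diagonal, Fin.sum_univ_two]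

lemma det_step (χ : Fin 2) (u : ℂ[X]) (m : ℕ) (A : Matrix (Fin 2) (Fin 2) ℂ[X]) :
    (liftMat χ u * delayMat χ m * A).det = X ^ m * A.det := by
  rw [Matrix.det_mul, Matrix.det_mul]
  fin_cases χ <;> simp [liftMat, delayMat]

lemma fin_two_eq_or (χ r : Fin 2) : r = χ ∨ r = 1 - χ := by
  revert χ r; decide

/-- If two lifting steps with the same delay produce matrices that agree up to constant row
scalings, and their inputs are degree-lifting in a common column, then the inputs agree up to the
same scalings and the filters are proportional. -/
lemma peel_step (χ : Fin 2) (u u' : ℂ[X]) (m : ℕ) (A A' : Matrix (Fin 2) (Fin 2) ℂ[X])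
    (c : Fin 2 → ℂ)
    (h : ∀ r k, (liftMat χ u * delayMat χ m * A) r k =
      C (c r) * (liftMat χ u' * delayMat χ m * A') r k)
    (hcop : IsCoprime (A' (1 - χ) 0) (A' (1 - χ) 1)) (j : Fin 2)
    (hj : (A χ j).degree < (A (1 - χ) j).degree)
    (hj' : (A' χ j).degree < (A' (1 - χ) j).degree) :
    (∀ r k, A r k = C (c r) * A' r k) ∧ C (c χ) * u' = C (c (1 - χ)) * u := by
  have hkept : ∀ k, A (1 - χ) k = C (c (1 - χ)) * A' (1 - χ) k := fun k => by
    simpa only [step_apply_kept] using h (1 - χ) k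
  have hupd : ∀ k, X ^ m * (A χ k - C (c χ) * A' χ k) =
      (C (c χ) * u' - C (c (1 - χ)) * u) * A' (1 - χ) k := fun k => by
    have := h χ k
    rw [step_apply_updated, step_apply_updated, hkept] at this
    linear_combination this
  -- Coprimality of the kept row lets `X ^ m` be cancelled from `w`.
  obtain ⟨v, hv⟩ : X ^ m ∣ C (c χ) * u' - C (c (1 - χ)) * u := by
    obtain ⟨a, b, hab⟩ := hcop
    refine ⟨a * (A χ 0 - C (c χ) * A' χ 0) + b * (A χ 1 - C (c χ) * A' χ 1), ?_⟩
    linear_combination (-(C (c χ) * u' - C (c (1 - χ)) * u)) * hab - a * hupd 0 - b * hupd 1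
  have hdiff : ∀ k, A χ k - C (c χ) * A' χ k = v * A' (1 - χ) k := fun k => by
    have h1 := hupd k
    rw [hv, mul_assoc] at h1
    exact mul_left_cancel₀ (pow_ne_zero m X_ne_zero) h1
  have hCle : ∀ (a : ℂ) (p : ℂ[X]), (C a * p).degree ≤ p.degree := fun a p => by
    rw [← smul_eq_C_mul]; exact degree_smul_le a p
  have hv0 : v = 0 := by
    by_contra hne
    have h1 : (A χ j - C (c χ) * A' χ j).degree < (A' (1 - χ) j).degree := by
      refine (degree_sub_le _ _).trans_lt (max_lt ?_ ?_)
      · refine hj.trans_le ?_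
        rw [hkept]
        exact hCle _ _
      · exact (hCle _ _).trans_lt hj'
    rw [hdiff, mul_comm] at h1
    exact absurd h1 (not_lt.mpr (degree_le_mul_left _ hne))
  refine ⟨fun r k => ?_, ?_⟩
  · rcases fin_two_eq_or χ r with rfl | rfl
    · have := hdiff k
      rw [hv0, zero_mul] at this
      exact sub_eq_zero.mp this
    · exact hkept k
  · rw [hv0, mul_zero] at hv
    exact sub_eq_zero.mp hv

/-- The degree of the determinant of a scaled cascade is its total delay. -/
lemma natDegree_det_cascade (N : ℕ) (a b : ℂ) (ha : a ≠ 0) (hb : b ≠ 0)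
    (χ : ℕ → Fin 2) (u : ℕ → ℂ[X]) (m : ℕ → ℕ) (P : ℕ → Matrix (Fin 2) (Fin 2) ℂ[X])
    (hP0 : P 0 = 1 ∨ P 0 = !![0, 1; 1, 0])
    (hrec : ∀ n < N, P (n + 1) = liftMat (χ n) (u n) * delayMat (χ n) (m n) * P n) :
    (Matrix.diagonal ![C a, C b] * P N).det.natDegree = ∑ i ∈ Finset.range N, m i := by
  have hdet : ∀ n ≤ N, (P n).det = X ^ (∑ i ∈ Finset.range n, m i) * (P 0).det := by
    intro n
    induction n with
    | zero => simp
    | succ n ih =>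
      intro hn
      rw [hrec n hn, det_step, ih (by omega), Finset.sum_range_succ, pow_add]
      ring
  have h0 : ∃ s : ℂ, s ≠ 0 ∧ (P 0).det = C s := by
    rcases hP0 with h | h
    · exact ⟨1, one_ne_zero, by simp [h]⟩
    · exact ⟨-1, by simp, by simp [h, Matrix.det_fin_two]⟩
  obtain ⟨s, hs, hs'⟩ := h0
  have : (Matrix.diagonal ![C a, C b] * P N).det =
      C (a * b * s) * X ^ (∑ i ∈ Finset.range N, m i) := by
    rw [Matrix.det_mul, hdet N le_rfl, hs']
    simp
    ring
  rw [this, natDegree_C_mul_X_pow _ _ (mul_ne_zero (mul_ne_zero ha hb) hs)]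

/-- The degree-lifting condition in terms of the characteristic of the upcoming step: the row
`1 - χ n` that step `n` keeps dominates the row `χ n` that it updates. -/
lemma degLiftIn_iff (P : ℕ → Matrix (Fin 2) (Fin 2) ℂ[X]) (χ : ℕ → Fin 2) (N n : ℕ) (hn : n < N)
    (halt : ∀ n, n + 1 < N → χ (n + 1) = 1 - χ n) (j : Fin 2) :
    degLiftIn P χ n j ↔ (∀ r : Fin 2, IsCoprime (P n r 0) (P n r 1)) ∧
      (P n (χ n) j).degree < (P n (1 - χ n) j).degree := by
  have h1 : (if n = 0 then 1 - χ 0 else χ (n - 1)) = 1 - χ n := by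
    rcases n with _ | n
    · simp
    · simp [halt n hn]
  have h2 : (1 : Fin 2) - (1 - χ n) = χ n := by
    generalize χ n = x
    revert x; decide
  unfold degLiftIn
  rw [h1, h2]

/-- A left degree-lifting factorization is uniquely determined by its lifting
signature: two left degree-lifting standard causal lifting cascades for the
same coprimified matrix `Q₀`, with the same number `N` of lifting steps, the
same initial update characteristic, the same determinantal delay degrees
`deg|Λ_n|` for `1 ≤ n ≤ N−2`, and the same degree signatures
`sig(P n) = sig(P' n)` for `0 ≤ n ≤ N−1`, have identical corresponding
factors.  (Cascades are encoded by their right partial products, with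
`Λ₀ := I` via `m 0 = 0`.) -/
theorem uniqueness_given_signature
    (N : ℕ) (hN : 1 ≤ N)
    (Q₀ : Matrix (Fin 2) (Fin 2) (Polynomial ℂ))
    (hrows : ∀ r : Fin 2, IsCoprime (Q₀ r 0) (Q₀ r 1))
    (hcols : ∀ j : Fin 2, IsCoprime (Q₀ 0 j) (Q₀ 1 j))
    (κ₀ κ₁ κ₀' κ₁' : ℂ) (hκ₀ : κ₀ ≠ 0) (hκ₁ : κ₁ ≠ 0)
    (hκ₀' : κ₀' ≠ 0) (hκ₁' : κ₁' ≠ 0)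
    (χ χ' : ℕ → Fin 2) (u u' : ℕ → Polynomial ℂ) (m m' : ℕ → ℕ)
    (P₀ P₀' : Matrix (Fin 2) (Fin 2) (Polynomial ℂ))
    (P P' : ℕ → Matrix (Fin 2) (Fin 2) (Polynomial ℂ))
    (hP₀ : P₀ = 1 ∨ P₀ = !![0, 1; 1, 0])
    (hP₀' : P₀' = 1 ∨ P₀' = !![0, 1; 1, 0])
    (hu : ∀ n < N, u n ≠ 0) (hu' : ∀ n < N, u' n ≠ 0)
    (halt : ∀ n, n + 1 < N → χ (n + 1) = 1 - χ n)
    (halt' : ∀ n, n + 1 < N → χ' (n + 1) = 1 - χ' n)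
    (hm0 : m 0 = 0) (hm0' : m' 0 = 0)
    (hP0 : P 0 = P₀) (hP0' : P' 0 = P₀')
    (hPrec : ∀ n < N, P (n + 1) = liftMat (χ n) (u n) * delayMat (χ n) (m n) * P n)
    (hPrec' : ∀ n < N, P' (n + 1) = liftMat (χ' n) (u' n) * delayMat (χ' n) (m' n) * P' n)
    (hfac : Q₀ = Matrix.diagonal ![C κ₀, C κ₁] * P N)
    (hfac' : Q₀ = Matrix.diagonal ![C κ₀', C κ₁'] * P' N)
    (hdl : ∀ n < N, ∃ j : Fin 2, degLiftIn P χ n j)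
    (hdl' : ∀ n < N, ∃ j : Fin 2, degLiftIn P' χ' n j)
    (hχ0 : χ 0 = χ' 0)
    (hΛdeg : ∀ n, 1 ≤ n → n ≤ N - 2 → m n = m' n)
    (hsig : ∀ n < N, ∀ j : Fin 2, degLiftIn P χ n j ↔ degLiftIn P' χ' n j) :
    κ₀ = κ₀' ∧ κ₁ = κ₁' ∧ P₀ = P₀' ∧
    (∀ n < N, liftMat (χ n) (u n) = liftMat (χ' n) (u' n)) ∧
    (∀ n, 1 ≤ n → n < N → delayMat (χ n) (m n) = delayMat (χ' n) (m' n)) := by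
  have hχ : ∀ n < N, χ n = χ' n := by
    intro n
    induction n with
    | zero => exact fun _ => hχ0
    | succ n ih => exact fun hn => by rw [halt n hn, halt' n hn, ih (by omega)]
  subst hP0' hP0
  -- `I` is degree-lifting only in column `1 - χ 0`, and `J` only in column `χ 0`.
  have hP00 : P 0 = P' 0 := by
    have h := hsig 0 hN (χ 0)
    rw [degLiftIn_iff P χ N 0 hN halt, degLiftIn_iff P' χ' N 0 hN halt', ← hχ0] at h
    generalize χ 0 = x at h
    rcases hP₀ with h1 | h1 <;> rcases hP₀' with h2 | h2 <;> rw [h1, h2] at h ⊢ <;>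
      exfalso <;> revert h <;> fin_cases x <;>
      simp [Fin.forall_fin_two, isCoprime_one_left, isCoprime_one_right]
  have hm : ∀ n < N, m n = m' n := by
    have hsum : ∑ i ∈ Finset.range N, m i = ∑ i ∈ Finset.range N, m' i := by
      rw [← natDegree_det_cascade N κ₀ κ₁ hκ₀ hκ₁ χ u m P hP₀ hPrec,
        ← natDegree_det_cascade N κ₀' κ₁' hκ₀' hκ₁' χ' u' m' P' hP₀' hPrec', ← hfac, ← hfac']
    obtain ⟨M, rfl⟩ : ∃ M, N = M + 1 := ⟨N - 1, by omega⟩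
    have hlow : ∀ n < M, m n = m' n := by
      intro n hn
      rcases Nat.eq_zero_or_pos n with rfl | hpos
      · rw [hm0, hm0']
      · exact hΛdeg n hpos (by omega)
    intro n hn
    rcases Nat.lt_succ_iff_lt_or_eq.mp hn with h | rfl
    · exact hlow n h
    · rw [Finset.sum_range_succ, Finset.sum_range_succ,
        Finset.sum_congr rfl (fun i hi => hlow i (Finset.mem_range.mp hi))] at hsum
      exact Nat.add_left_cancel hsum
  obtain ⟨c, hc⟩ : ∃ c : Fin 2 → ℂ, c = ![κ₀' / κ₀, κ₁' / κ₁] := ⟨_, rfl⟩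
  have hPN : ∀ r k, P N r k = C (c r) * P' N r k := by
    have hQ := hfac.symm.trans hfac'
    have key : ∀ (a b : ℂ) (p q : ℂ[X]), a ≠ 0 → C a * p = C b * q → p = C (b / a) * q := by
      intro a b p q ha h
      apply mul_left_cancel₀ (C_ne_zero.mpr ha)
      rw [h, ← mul_assoc, ← C_mul, mul_div_cancel₀ _ ha]
    intro r k
    have hrk := congrFun (congrFun hQ r) k
    rw [Matrix.diagonal_mul, Matrix.diagonal_mul] at hrk
    subst hc
    fin_cases r
    · exact key _ _ _ _ hκ₀ hrk
    · exact key _ _ _ _ hκ₁ hrk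
  have hpeel : ∀ n < N, (∀ r k, P (n + 1) r k = C (c r) * P' (n + 1) r k) →
      (∀ r k, P n r k = C (c r) * P' n r k) ∧ C (c (χ n)) * u' n = C (c (1 - χ n)) * u n := by
    intro n hn h
    obtain ⟨j, hj⟩ := hdl n hn
    have hj' := (hsig n hn j).mp hj
    rw [degLiftIn_iff P χ N n hn halt] at hj
    rw [degLiftIn_iff P' χ' N n hn halt', ← hχ n hn] at hj'
    rw [hPrec n hn, hPrec' n hn, ← hχ n hn, ← hm n hn] at h
    exact peel_step (χ n) (u n) (u' n) (m n) (P n) (P' n) c h (hj'.1 _) j hj.2 hj'.2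
  have hall : ∀ n ≤ N, ∀ r k, P n r k = C (c r) * P' n r k := by
    intro n hn
    induction hn using Nat.decreasingInduction with
    | self => exact hPN
    | of_succ n hn ih => exact (hpeel n hn ih).1
  have hc1 : ∀ r, c r = 1 := by
    intro r
    have h := hall 0 (Nat.zero_le N) r
    rw [hP00] at h
    have key : ∀ k, P' 0 r k = 1 → c r = 1 := by
      intro k hk
      have := h k
      rw [hk, mul_one] at this
      exact C_injective (by rw [← this, C_1])
    rcases hP₀' with h2 | h2
    · exact key r (by simp [h2])
    · exact key (1 - r) (by rw [h2]; fin_cases r <;> simp)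
  refine ⟨?_, ?_, hP00, fun n hn => ?_, fun n _ hn => by rw [hχ n hn, hm n hn]⟩
  · have h := hc1 0
    rw [hc] at h
    exact ((div_eq_one_iff_eq hκ₀).mp h).symm
  · have h := hc1 1
    rw [hc] at h
    exact ((div_eq_one_iff_eq hκ₁).mp h).symm
  · have h := (hpeel n hn (hall (n + 1) hn)).2
    rw [hc1, hc1, C_1, one_mul, one_mul] at h
    rw [hχ n hn, h]
end

section
/- Every 2×2 matrix Q₀ over ℂ[X] whose determinant equals a·X^{d} for some a ∈ ℂ, a ≠ 0, and d ≥ 0, and whose rows and columns are each coprime pairs in ℂ[X], admits a factorization in standard causal lifting form: there exist N ≥ 0, nonzero κ₀, κ₁ ∈ ℂ, P₀ ∈ {I, J}, lifting matrices U₀, …, U_{N−1} over ℂ[X] with nonzero lifting filters, and diagonal delay matrices Λ₁, …, Λ_{N−1} with χ(Λ_n) = χ(U_n) and strictly alternating update characteristics, such that Q₀ = diag(κ₀,κ₁)·U_{N−1}Λ_{N−1}⋯U₁Λ₁U₀·P₀. -/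
/-!
All delays can be extracted in a single, leftmost lifting step. Write `Q₀ = !![p, q; r, s]` and
suppose `d > 0`. Coprimality of rows and columns together with `det Q₀(0) = 0` forces every entry
to be nonzero at `0`. Since `r` is coprime to `X ^ d`, a division with remainder gives
`p = u * r + X ^ d * p'` with `deg p' < deg r` (`exists_delayed_division`), and the determinant
condition makes `q - u * s` divisible by `X ^ d` as well. Hence `Q₀` is an upper lifting step with
delay `d` times a matrix `!![p', q'; r, s]` of constant nonzero determinant.

For a matrix of constant determinant with `deg p < deg r`, the Euclidean algorithm in the first
column yields a delay-free cascade whose leftmost factor, if any, is lower triangular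
(`euclid`), so the two parts alternate properly. The condition `Λ₀ = I` is respected
because the second part is not empty: `r` and `s` are both nonzero. When `d = 0`, the Euclidean
algorithm alone suffices, after one more step if it is not already applicable up to a row swap.

Cascades are handled through the inductive predicate `Cascade`, and the diagonal gains are moved
to the left of each lifting step by rescaling its filter (`Scaled.step`).
-/

open Polynomial

/-- `Cascade N c M` says that `M` is a cascade `U_{N-1} Λ_{N-1} ⋯ U₁ Λ₁ U₀ P₀` of `N` alternating
lifting steps with `P₀ ∈ {I, J}`, whose leftmost step has update characteristic `c`. For `N = 0`
the index `c` is unconstrained, so that the first step may have either characteristic. -/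
inductive Cascade : ℕ → Fin 2 → Matrix (Fin 2) (Fin 2) (Polynomial ℂ) → Prop
  | one (c : Fin 2) : Cascade 0 c 1
  | swap (c : Fin 2) : Cascade 0 c !![0, 1; 1, 0]
  | step {N : ℕ} {c : Fin 2} {M : Matrix (Fin 2) (Fin 2) (Polynomial ℂ)}
      (h : Cascade N c M) (u : Polynomial ℂ) (m : ℕ) (hu : u ≠ 0) (hm : N = 0 → m = 0) :
      Cascade (N + 1) (1 - c) (liftMat (1 - c) u * delayMat (1 - c) m * M)

/-- A cascade in the sense of `Cascade`, multiplied on the left by nonzero constant gains. -/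
def Scaled (N : ℕ) (c : Fin 2) (Q : Matrix (Fin 2) (Fin 2) (Polynomial ℂ)) : Prop :=
  ∃ κ₀ κ₁ : ℂ, κ₀ ≠ 0 ∧ κ₁ ≠ 0 ∧ ∃ M, Cascade N c M ∧ Q = Matrix.diagonal ![C κ₀, C κ₁] * M

/-- Unfolds the inductive predicate into sequences of characteristics, filters, delays and right
partial products. -/
lemma Cascade.exists_sequences {N : ℕ} {c : Fin 2} {M : Matrix (Fin 2) (Fin 2) (Polynomial ℂ)}
    (h : Cascade N c M) :
    ∃ (χ : ℕ → Fin 2) (u : ℕ → Polynomial ℂ) (m : ℕ → ℕ)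
      (P₀ : Matrix (Fin 2) (Fin 2) (Polynomial ℂ))
      (P : ℕ → Matrix (Fin 2) (Fin 2) (Polynomial ℂ)),
      (P₀ = 1 ∨ P₀ = !![0, 1; 1, 0]) ∧
      (∀ n < N, u n ≠ 0) ∧
      (∀ n, n + 1 < N → χ (n + 1) = 1 - χ n) ∧
      m 0 = 0 ∧
      P 0 = P₀ ∧
      (∀ n < N, P (n + 1) = liftMat (χ n) (u n) * delayMat (χ n) (m n) * P n) ∧
      P N = M ∧ (∀ n, n + 1 = N → χ n = c) := by
  induction h with
  | one c => exact ⟨fun _ => 0, fun _ => 0, fun _ => 0, 1, fun _ => 1, by simp⟩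
  | swap c =>
    exact ⟨fun _ => 0, fun _ => 0, fun _ => 0, !![0, 1; 1, 0], fun _ => !![0, 1; 1, 0], by simp⟩
  | @step N c M h v k hv hk ih =>
    obtain ⟨χ, u, m, P₀, P, hP₀, hu, hχ, hm, hP, hstep, hPN, hc⟩ := ih
    refine ⟨Function.update χ N (1 - c), Function.update u N v, Function.update m N k, P₀,
      Function.update P (N + 1) (liftMat (1 - c) v * delayMat (1 - c) k * M),
      hP₀, ?_, ?_, ?_, ?_, ?_, ?_, ?_⟩
    · intro n hn
      by_cases h : n = N
      · subst h; simpa using hv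
      · simpa [h] using hu n (by omega)
    · intro n hn
      have h1 : n ≠ N := by omega
      by_cases h : n + 1 = N
      · have := hc n h
        rw [h]
        simp [h1, this]
      · simpa [h, h1] using hχ n (by omega)
    · by_cases h : N = 0
      · subst h; simpa using hk rfl
      · simpa [Function.update_of_ne (Ne.symm h)] using hm
    · simpa [Function.update_of_ne (show 0 ≠ N + 1 by omega)] using hP
    · intro n hn
      have h2 : n ≠ N + 1 := by omega
      by_cases h : n = N
      · subst h; simp [hPN]
      · simpa [h, h2] using hstep n (by omega)
    · simp
    · intro n hn
      obtain rfl : n = N := by omega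
      simp

lemma liftMat_mul_delayMat_zero (u : Polynomial ℂ) (m : ℕ) :
    liftMat 0 u * delayMat 0 m = !![X ^ m, u; 0, 1] := by
  ext1 i j; fin_cases i <;> fin_cases j <;>
    simp [liftMat, delayMat, Matrix.mul_apply, Matrix.diagonal_apply, -Matrix.cons_mul]

lemma liftMat_mul_delayMat_one (u : Polynomial ℂ) (m : ℕ) :
    liftMat 1 u * delayMat 1 m = !![1, 0; u, X ^ m] := by
  ext1 i j; fin_cases i <;> fin_cases j <;>
    simp [liftMat, delayMat, Matrix.mul_apply, Matrix.diagonal_apply, -Matrix.cons_mul]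

lemma diagonal_pair (a b : Polynomial ℂ) : Matrix.diagonal ![a, b] = !![a, 0; 0, b] := by
  ext1 i j; fin_cases i <;> fin_cases j <;> simp

/-- Swapping the rows of a cascade exchanges the two update characteristics throughout. -/
lemma Cascade.swap_rows {N : ℕ} {c : Fin 2} {M : Matrix (Fin 2) (Fin 2) (Polynomial ℂ)}
    (h : Cascade N c M) : Cascade N (1 - c) (!![0, 1; 1, 0] * M) := by
  induction h with
  | one c => simpa using Cascade.swap (1 - c)
  | swap c =>
    convert Cascade.one (1 - c) using 1
    ext i j; fin_cases i <;> fin_cases j <;> simp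
  | @step N c M h v k hv hk ih =>
    have key : !![0, 1; 1, 0] * (liftMat (1 - c) v * delayMat (1 - c) k) =
        liftMat (1 - (1 - c)) v * delayMat (1 - (1 - c)) k * !![0, 1; 1, 0] := by
      have hc : c = 0 ∨ c = 1 := by omega
      rcases hc with rfl | rfl
      · rw [sub_zero, sub_self, liftMat_mul_delayMat_zero, liftMat_mul_delayMat_one]
        simp
      · rw [sub_self, sub_zero, liftMat_mul_delayMat_zero, liftMat_mul_delayMat_one]
        simp
    rw [← Matrix.mul_assoc, key, Matrix.mul_assoc]
    exact ih.step v k hv hk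

lemma Scaled.swap_rows {N : ℕ} {c : Fin 2} {Q : Matrix (Fin 2) (Fin 2) (Polynomial ℂ)}
    (h : Scaled N c Q) : Scaled N (1 - c) (!![0, 1; 1, 0] * Q) := by
  obtain ⟨k0, k1, h0, h1, M, hM, rfl⟩ := h
  refine ⟨k1, k0, h1, h0, _, hM.swap_rows, ?_⟩
  rw [← Matrix.mul_assoc, ← Matrix.mul_assoc]
  congr 1
  simp [diagonal_pair]

/-- Gains can be moved to the left of a lifting step by rescaling its filter. -/
lemma Scaled.step {N : ℕ} {c : Fin 2} {Q : Matrix (Fin 2) (Fin 2) (Polynomial ℂ)}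
    (h : Scaled N c Q) (u : Polynomial ℂ) (m : ℕ) (hu : u ≠ 0) (hm : N = 0 → m = 0) :
    Scaled (N + 1) (1 - c) (liftMat (1 - c) u * delayMat (1 - c) m * Q) := by
  obtain ⟨k0, k1, h0, h1, M, hM, rfl⟩ := h
  have e0 : C k0 * C k0⁻¹ = (1 : Polynomial ℂ) := by rw [← C_mul, mul_inv_cancel₀ h0, C_1]
  have e1 : C k1 * C k1⁻¹ = (1 : Polynomial ℂ) := by rw [← C_mul, mul_inv_cancel₀ h1, C_1]
  have hk : ∀ x y : ℂ, x ≠ 0 → y ≠ 0 → C x⁻¹ * C y * u ≠ 0 := fun x y hx hy =>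
    mul_ne_zero (mul_ne_zero (C_ne_zero.2 (inv_ne_zero hx)) (C_ne_zero.2 hy)) hu
  have hc : c = 0 ∨ c = 1 := by omega
  rcases hc with rfl | rfl
  · refine ⟨k0, k1, h0, h1, _, hM.step (C k1⁻¹ * C k0 * u) m (hk _ _ h1 h0) hm, ?_⟩
    rw [← Matrix.mul_assoc, ← Matrix.mul_assoc]
    congr 1
    rw [sub_zero, liftMat_mul_delayMat_one, liftMat_mul_delayMat_one, diagonal_pair,
      Matrix.mul_fin_two, Matrix.mul_fin_two]
    congr! 3 <;> grind
  · refine ⟨k0, k1, h0, h1, _, hM.step (C k0⁻¹ * C k1 * u) m (hk _ _ h0 h1) hm, ?_⟩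
    rw [← Matrix.mul_assoc, ← Matrix.mul_assoc]
    congr 1
    rw [sub_self, liftMat_mul_delayMat_zero, liftMat_mul_delayMat_zero, diagonal_pair,
      Matrix.mul_fin_two, Matrix.mul_fin_two]
    congr! 3 <;> grind

lemma Scaled.step_upper {N : ℕ} {p q r s : Polynomial ℂ} (h : Scaled N 1 !![p, q; r, s])
    {p₁ q₁ : Polynomial ℂ} (u : Polynomial ℂ) (m : ℕ) (hu : u ≠ 0) (hm : N = 0 → m = 0)
    (hp : p₁ = u * r + X ^ m * p) (hq : q₁ = u * s + X ^ m * q) :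
    Scaled (N + 1) 0 !![p₁, q₁; r, s] := by
  have := h.step u m hu hm
  rw [sub_self, liftMat_mul_delayMat_zero, Matrix.mul_fin_two] at this
  have e : !![p₁, q₁; r, s] =
      !![X ^ m * p + u * r, X ^ m * q + u * s; 0 * p + 1 * r, 0 * q + 1 * s] := by
    rw [hp, hq]
    simp [add_comm]
  rwa [e]

lemma Scaled.swap_rows_entries {N : ℕ} {c : Fin 2} {p q r s : Polynomial ℂ}
    (h : Scaled N c !![p, q; r, s]) : Scaled N (1 - c) !![r, s; p, q] := by
  simpa using h.swap_rows

/-- If `deg p < deg r` and the determinant is a nonzero constant, the Euclidean algorithm in the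
first column gives a cascade whose leftmost step is lower triangular. The bound `n` on `deg p` is
the induction variable. -/
lemma euclid (n : ℕ) : ∀ (p q r s : Polynomial ℂ) (a : ℂ), a ≠ 0 → p * s - q * r = C a →
    p.degree < n → p.degree < r.degree → ∃ N, Scaled N 1 !![p, q; r, s] := by
  induction n with
  | zero => ?_
  | succ n ih => ?_
  all_goals
    intro p q r s a ha hdet hn hpr
    by_cases hp : p = 0
    · -- here `q` and `r` are nonzero constants, and at most one lower step applied to `J` remains
      subst hp
      have hqr : IsUnit (q * r) := by
        have : q * r = C (-a) := by rw [C_neg, ← hdet]; ring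
        rw [this]
        exact isUnit_C.2 (isUnit_iff_ne_zero.2 (neg_ne_zero.2 ha))
      obtain ⟨k0, hk0, rfl⟩ := Polynomial.isUnit_iff.1 (isUnit_of_mul_isUnit_left hqr)
      obtain ⟨k1, hk1, rfl⟩ := Polynomial.isUnit_iff.1 (isUnit_of_mul_isUnit_right hqr)
      have h0 : ∀ c, Scaled 0 c !![C k1, 0; 0, C k0] := by
        intro c
        refine ⟨k1, k0, hk1.ne_zero, hk0.ne_zero, 1, Cascade.one _, ?_⟩
        ext1 i j; fin_cases i <;> fin_cases j <;> simp
      by_cases hs : s = 0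
      · subst hs
        exact ⟨0, by simpa using (h0 0).swap_rows_entries⟩
      · have hv : s * C k0⁻¹ ≠ 0 := mul_ne_zero hs (C_ne_zero.2 (inv_ne_zero hk0.ne_zero))
        have e0 : s * C k0⁻¹ * C k0 = s := by
          rw [mul_assoc, ← C_mul, inv_mul_cancel₀ hk0.ne_zero, C_1, mul_one]
        have := ((h0 1).step_upper (p₁ := C k1 * 1) _ 0 hv (fun _ => rfl) (by simp)
          (by simpa using e0.symm)).swap_rows_entries
        exact ⟨1, by simpa using this⟩
    · first
      | -- the bound `deg p < 0` leaves only `p = 0`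
        exact absurd (Polynomial.degree_eq_bot.1 (Nat.WithBot.lt_zero_iff.1 hn)) hp
      | -- divide `r` by `p`, and exchange the rows to use the induction hypothesis
        have hpn : p.degree ≤ n := by
          rw [degree_eq_natDegree hp] at hn ⊢
          exact_mod_cast Nat.lt_succ_iff.1 (by exact_mod_cast hn)
        have hlt : (r % p).degree < p.degree := Polynomial.degree_mod_lt r hp
        have hr : p * (r / p) + r % p = r := EuclideanDomain.div_add_mod r p
        have hu : r / p ≠ 0 := by
          intro h
          rw [h, mul_zero, zero_add] at hr
          rw [hr] at hlt
          exact lt_asymm hlt hpr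
        obtain ⟨N, hN⟩ := ih (r % p) (s - r / p * q) p q (-a) (neg_ne_zero.2 ha)
          (by rw [C_neg, ← hdet]; linear_combination q * hr)
          (lt_of_lt_of_le hlt hpn) hlt
        have := (hN.step_upper (p₁ := r) (q₁ := s) _ 0 hu (fun _ => rfl)
          (by linear_combination -hr) (by ring)).swap_rows_entries
        exact ⟨N + 1, by simpa using this⟩

/-- Division with remainder by `r` in which the remainder is moreover divisible by `X ^ d`. -/
lemma exists_delayed_division (p r : Polynomial ℂ) (d : ℕ) (hr : r ≠ 0)
    (hc : IsCoprime (X ^ d) r) :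
    ∃ u p' : Polynomial ℂ, p = u * r + X ^ d * p' ∧ p'.degree < r.degree := by
  obtain ⟨x, y, hxy⟩ := hc
  refine ⟨p * y + X ^ d * ((p * x) / r), (p * x) % r, ?_, Polynomial.degree_mod_lt _ hr⟩
  have := EuclideanDomain.div_add_mod (p * x) r
  linear_combination -p * hxy - X ^ d * this

lemma IsCoprime.coeff_zero_ne {f g : Polynomial ℂ} (h : IsCoprime f g) :
    f.coeff 0 ≠ 0 ∨ g.coeff 0 ≠ 0 := by
  obtain ⟨x, y, hxy⟩ := h
  by_contra! hc
  have := congrArg (fun t => t.coeff 0) hxy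
  simp [mul_coeff_zero, hc.1, hc.2] at this

/-- The factorization for a matrix given by its entries: one delayed step followed by `euclid` when
`d > 0`, and `euclid` after at most one step or a row swap when `d = 0`. -/
lemma exists_scaled (p q r s : Polynomial ℂ) (a : ℂ) (ha : a ≠ 0) (d : ℕ)
    (hdet : p * s - q * r = C a * X ^ d) (hr0 : IsCoprime p q) (hr1 : IsCoprime r s)
    (hc0 : IsCoprime p r) (hc1 : IsCoprime q s) : ∃ N c, Scaled N c !![p, q; r, s] := by
  rcases Nat.eq_zero_or_pos d with rfl | hd
  · rw [pow_zero, mul_one] at hdet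
    have bound : ∀ f : Polynomial ℂ, f.degree < ((f.natDegree + 1 : ℕ) : WithBot ℕ) := fun f =>
      lt_of_le_of_lt degree_le_natDegree (by exact_mod_cast Nat.lt_succ_self _)
    rcases lt_or_ge p.degree r.degree with h | h
    · obtain ⟨N, hN⟩ := euclid _ p q r s a ha hdet (bound p) h
      exact ⟨N, _, hN⟩
    by_cases hr : r = 0 ∨ r.degree < p.degree
    · have h' : r.degree < p.degree := by
        rcases hr with rfl | hr
        · rw [degree_zero, bot_lt_iff_ne_bot, Ne, degree_eq_bot]
          rintro rfl
          exact ha (by simpa using hdet.symm)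
        · exact hr
      obtain ⟨N, hN⟩ := euclid _ r s p q (-a) (neg_ne_zero.2 ha)
        (by rw [C_neg, ← hdet]; ring) (bound r) h'
      exact ⟨N, _, hN.swap_rows_entries⟩
    push Not at hr
    obtain ⟨u, p', hp, hlt⟩ := exists_delayed_division p r 0 hr.1 (by simpa using isCoprime_one_left)
    rw [pow_zero, one_mul] at hp
    have hu : u ≠ 0 := by
      rintro rfl
      rw [zero_mul, zero_add] at hp
      rw [hp] at h
      exact absurd hlt (not_lt.2 h)
    obtain ⟨N, hN⟩ := euclid _ p' (q - u * s) r s a ha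
      (by rw [← hdet]; linear_combination -s * hp) (bound p') hlt
    exact ⟨N + 1, _, hN.step_upper u 0 hu (fun _ => rfl) (by linear_combination hp) (by ring)⟩
  · -- all entries are nonzero at `0`, as the matrix has rank one there
    have h0 : p.coeff 0 * s.coeff 0 - q.coeff 0 * r.coeff 0 = 0 := by
      have := congrArg (fun t => t.coeff 0) hdet
      simpa [mul_coeff_zero, coeff_X_pow, hd.ne] using this
    have g1 := hr0.coeff_zero_ne
    have g2 := hr1.coeff_zero_ne
    have g3 := hc0.coeff_zero_ne
    have g4 := hc1.coeff_zero_ne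
    have hp0 : p.coeff 0 ≠ 0 := by grind
    have hr0 : r.coeff 0 ≠ 0 := by grind
    have hs0 : s.coeff 0 ≠ 0 := by grind
    have hr : r ≠ 0 := by rintro rfl; simp at hr0
    have hs : s ≠ 0 := by rintro rfl; simp at hs0
    have hcop : IsCoprime (X ^ d) r := by
      refine IsCoprime.pow_left ((Polynomial.irreducible_X.coprime_iff_not_dvd).2 ?_)
      rwa [X_dvd_iff]
    obtain ⟨u, p', hp, hlt⟩ := exists_delayed_division p r d hr hcop
    have hu : u ≠ 0 := by
      rintro rfl
      rw [hp] at hp0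
      simp [mul_coeff_zero, coeff_X_pow, hd.ne] at hp0
    -- `r * (q - u * s)` equals `X ^ d * (s * p' - a)`, and `r` is coprime to `X ^ d`
    obtain ⟨q', hq⟩ : X ^ d ∣ q - u * s :=
      hcop.dvd_of_dvd_mul_left ⟨s * p' - C a, by linear_combination -hdet + s * hp⟩
    have hdet' : p' * s - q' * r = C a := by
      refine mul_left_cancel₀ (pow_ne_zero d (X_ne_zero (R := ℂ))) ?_
      linear_combination hdet - s * hp + r * hq
    obtain ⟨N, hN⟩ := euclid (p'.natDegree + 1) p' q' r s a ha hdet'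
      (lt_of_le_of_lt degree_le_natDegree (by exact_mod_cast Nat.lt_succ_self _)) hlt
    -- an empty cascade would have a zero entry in its second row
    have hN0 : N ≠ 0 := by
      rintro rfl
      obtain ⟨k0, k1, -, -, M, hM, hQ⟩ := hN
      have e0 := congrFun (congrFun hQ 1) 0
      have e1 := congrFun (congrFun hQ 1) 1
      cases hM with
      | one => exact hr (by simpa using e0)
      | swap => exact hs (by simpa using e1)
    exact ⟨N + 1, _, hN.step_upper u d hu (fun h => absurd h hN0) hp (by linear_combination hq)⟩

/-- Correctness (termination) of the Causal Complementation Algorithm: every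
2×2 matrix `Q₀` over ℂ[X] with determinant `a·X^d` (`a ≠ 0`) and coprime rows
and columns admits a factorization in standard causal lifting form
`Q₀ = diag(κ₀,κ₁)·U_{N−1}Λ_{N−1}⋯U₁Λ₁U₀·P₀`, with `κ₀, κ₁ ≠ 0`,
`P₀ ∈ {I, J}`, nonzero lifting filters, strictly alternating update
characteristics, and `χ(Λ_n) = χ(U_n)`.  The cascade is encoded by its right
partial products `P`, with `Λ₀ := I` via `m 0 = 0`; when `N = 0`, the
factorization reads `Q₀ = diag(κ₀,κ₁)·P₀`. -/
theorem cca_existence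
    (Q₀ : Matrix (Fin 2) (Fin 2) (Polynomial ℂ))
    (a : ℂ) (ha : a ≠ 0) (d : ℕ)
    (hdet : Q₀.det = C a * X ^ d)
    (hrows : ∀ r : Fin 2, IsCoprime (Q₀ r 0) (Q₀ r 1))
    (hcols : ∀ j : Fin 2, IsCoprime (Q₀ 0 j) (Q₀ 1 j)) :
    ∃ (N : ℕ) (κ₀ κ₁ : ℂ) (χ : ℕ → Fin 2) (u : ℕ → Polynomial ℂ) (m : ℕ → ℕ)
      (P₀ : Matrix (Fin 2) (Fin 2) (Polynomial ℂ))
      (P : ℕ → Matrix (Fin 2) (Fin 2) (Polynomial ℂ)),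
      κ₀ ≠ 0 ∧ κ₁ ≠ 0 ∧
      (P₀ = 1 ∨ P₀ = !![0, 1; 1, 0]) ∧
      (∀ n < N, u n ≠ 0) ∧
      (∀ n, n + 1 < N → χ (n + 1) = 1 - χ n) ∧
      m 0 = 0 ∧
      P 0 = P₀ ∧
      (∀ n < N, P (n + 1) = liftMat (χ n) (u n) * delayMat (χ n) (m n) * P n) ∧
      Q₀ = Matrix.diagonal ![C κ₀, C κ₁] * P N := by
  obtain ⟨N, c, κ₀, κ₁, h0, h1, M, hM, hQ⟩ := exists_scaled (Q₀ 0 0) (Q₀ 0 1) (Q₀ 1 0) (Q₀ 1 1)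
    a ha d (by rw [← hdet, Matrix.det_fin_two]) (hrows 0) (hrows 1) (hcols 0) (hcols 1)
  obtain ⟨χ, u, m, P₀, P, hP₀, hu, hχ, hm, hP, hstep, hPN, -⟩ := hM.exists_sequences
  refine ⟨N, κ₀, κ₁, χ, u, m, P₀, P, h0, h1, hP₀, hu, hχ, hm, hP, hstep, ?_⟩
  rw [hPN, ← hQ]
  exact Matrix.eta_fin_two Q₀
end

section
/- Let Q₀ be a 2×2 matrix over ℂ[X] with coprime rows and coprime columns, and suppose Q₀ = V · Δ · Q₁ where V = !![1, S; 0, 1] for some S ∈ ℂ[X], Δ = diag(X^m, 1) for some m ≥ 0, and Q₁ is a 2×2 matrix over ℂ[X] whose row 0 (the row of coprimified remainders) is a coprime pair. Then Q₁ has coprime rows and coprime columns. -/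
open Polynomial

/-- Coprimality propagation in a left downlifting step: if
`Q₀ = !![1, S; 0, 1] * diag(X^m, 1) * Q₁` where `Q₀` has coprime rows and
coprime columns and row 0 of `Q₁` (the row of coprimified remainders) is a
coprime pair, then `Q₁` has coprime rows and coprime columns. -/
theorem coprime_propagation
    (Q₀ Q₁ : Matrix (Fin 2) (Fin 2) (Polynomial ℂ))
    (S : Polynomial ℂ) (m : ℕ)
    (hfac : Q₀ = !![1, S; 0, 1] * Matrix.diagonal ![X ^ m, 1] * Q₁)
    (hrows : ∀ r : Fin 2, IsCoprime (Q₀ r 0) (Q₀ r 1))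
    (hcols : ∀ j : Fin 2, IsCoprime (Q₀ 0 j) (Q₀ 1 j))
    (hrow0 : IsCoprime (Q₁ 0 0) (Q₁ 0 1)) :
    (∀ r : Fin 2, IsCoprime (Q₁ r 0) (Q₁ r 1)) ∧
    (∀ j : Fin 2, IsCoprime (Q₁ 0 j) (Q₁ 1 j)) := by
  have h0 : ∀ j, Q₀ 0 j = X ^ m * Q₁ 0 j + S * Q₁ 1 j := by
    intro j
    rw [hfac, Matrix.mul_apply, Fin.sum_univ_two, Matrix.mul_diagonal, Matrix.mul_diagonal]
    simp
  have h1 : ∀ j, Q₀ 1 j = Q₁ 1 j := by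
    intro j
    rw [hfac, Matrix.mul_apply, Fin.sum_univ_two, Matrix.mul_diagonal, Matrix.mul_diagonal]
    simp
  refine ⟨fun r => ?_, fun j => ?_⟩
  · fin_cases r
    · exact hrow0
    · have h := hrows 1
      rw [h1, h1] at h
      exact h
  · obtain ⟨u, v, huv⟩ := hcols j
    -- A Bézout relation for column `j` of `Q₀` is, after regrouping,
    -- one for column `j` of `Q₁`.
    rw [h0, h1] at huv
    exact ⟨u * X ^ m, u * S + v, by linear_combination huv⟩
end
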